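/- Let μ₀, μ₁ ∈ 𝒫₂(X) and t ∈ (0,1). The set ℐ_t(μ₀,μ₁) of t-intermediate points, consisting of ν ∈ 𝒫₂(X) with W₂(μ₀,ν) = t·W₂(μ₀,μ₁) and W₂(μ₁,ν) = (1−t)·W₂(μ₀,μ₁), is a convex and closed subset of (𝒫₂(X), W₂). -/

import Mathlib

open MeasureTheory Set Filter Topology ENNReal

variable {X : Type*} [MetricSpace X] [MeasurableSpace X] [BorelSpace X]

/-- `π` is a transport plan (coupling) between `μ` and `ν`. -/
def IsCoupling (π : Measure (X × X)) (μ ν : Measure X) : Prop :=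
  π.map Prod.fst = μ ∧ π.map Prod.snd = ν

/-- Squared quadratic optimal transport cost. -/
noncomputable def W2sq (μ ν : Measure X) : ℝ≥0∞ :=
  ⨅ (π : Measure (X × X)) (_ : IsCoupling π μ ν),
    ∫⁻ p, ENNReal.ofReal (dist p.1 p.2 ^ 2) ∂π

/-- Quadratic Wasserstein distance (`ℝ≥0∞`-valued). -/
noncomputable def W2 (μ ν : Measure X) : ℝ≥0∞ := W2sq μ ν ^ (1/2 : ℝ)

/-- `μ` has finite second moment with base point `x₀`. -/
def FiniteSecondMoment (μ : Measure X) (x₀ : X) : Prop :=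
  ∫⁻ x, ENNReal.ofReal (dist x₀ x ^ 2) ∂μ < ⊤

/-- `μ ∈ 𝒫₂(X)`: a Borel probability measure with finite second moment. -/
def InP2 (μ : Measure X) (x₀ : X) : Prop :=
  IsProbabilityMeasure μ ∧ FiniteSecondMoment μ x₀

/-- The set `ℐ_t(μ₀,μ₁)` of `t`-intermediate points between `μ₀` and `μ₁`. -/
def InterPoints (t : ℝ) (μ₀ μ₁ : Measure X) (x₀ : X) : Set (Measure X) :=
  {ν | InP2 ν x₀ ∧ W2 μ₀ ν = ENNReal.ofReal t * W2 μ₀ μ₁ ∧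
        W2 μ₁ ν = ENNReal.ofReal (1 - t) * W2 μ₀ μ₁}

/-
Let `D = W₂(μ₀, μ₁) < ∞`. If `W₂(μ₀, ν) ≤ t D` and `W₂(μ₁, ν) ≤ (1 - t) D`, the triangle inequality
forces both to be equalities, so only upper bounds have to be checked. They survive convex
combinations because `W₂²` is jointly convex (couplings add up), and limits by the triangle
inequality.

The work is in the triangle inequality. In a non-separable `X` couplings may fail to disintegrate,
and the distance may fail to be measurable for the product `σ`-algebra, in which case its integrals
are lower integrals. Couplings are therefore glued only after their middle coordinate has been
mapped measurably to a discrete space `ι`, with fibres of diameter at most `ε`. Over `ι` every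
section `s : ι → α` is measurable, so conditional probabilities can be tested along all sections;
and a property that holds almost everywhere along every section holds, for almost every `i`, at all
points of the fibre: otherwise choose a bad point in each bad fibre.
-/

universe u

theorem exists_forall_mem_measurableSet_preimage {ι Y : Type*} [PseudoEMetricSpace Y]
    [MeasurableSpace Y] [OpensMeasurableSpace Y] {U : ι → Set Y} (hU : ∀ i, IsOpen (U i))
    (hcover : ⋃ i, U i = univ) (hfin : LocallyFinite U) :
    ∃ f : Y → ι, (∀ y, y ∈ U (f y)) ∧ ∀ S, MeasurableSet (f ⁻¹' S) := by
  obtain ⟨_, hwf⟩ := exists_wellFoundedLT ι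
  have hne (y : Y) : {i | y ∈ U i}.Nonempty := mem_iUnion.1 (hcover ▸ mem_univ y)
  let f (y : Y) : ι := hwf.wf.min {i | y ∈ U i} (hne y)
  have hfU (y : Y) : y ∈ U (f y) := hwf.wf.min_mem _ (hne y)
  choose F hF_closed hF_sub hF_iUnion _ using fun i => (hU i).exists_iUnion_isClosed
  refine ⟨f, hfU, fun S => ?_⟩
  have preimage_eq : f ⁻¹' S = ⋃ n, ⋃ i : S, F i n \ ⋃ j < i.1, U j := by
    ext y
    constructor
    · intro hy
      obtain ⟨n, hn⟩ := mem_iUnion.1 ((hF_iUnion (f y)).symm ▸ hfU y)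
      have notMem_of_lt : y ∉ ⋃ j < f y, U j := by
        simpa using fun j hj hyj => hwf.wf.not_lt_min {i | y ∈ U i} hyj hj
      exact mem_iUnion₂.2 ⟨n, ⟨f y, hy⟩, hn, notMem_of_lt⟩
    · intro hy
      obtain ⟨n, i, hyF, hyU⟩ := mem_iUnion₂.1 hy
      have le_i : f y ≤ i := not_lt.1 (hwf.wf.not_lt_min {i | y ∈ U i} (hF_sub i n hyF))
      have i_le : i ≤ f y := not_lt.1 fun hlt => hyU (mem_biUnion hlt (hfU y))
      exact mem_preimage.2 ((le_i.antisymm i_le).symm ▸ i.2)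
  rw [preimage_eq]
  refine .iUnion fun n => IsClosed.measurableSet ?_
  have hfin_S := hfin.comp_injective (Subtype.val_injective (p := (· ∈ S)))
  refine (hfin_S.subset fun i => ?_).isClosed_iUnion fun i => ?_
  · exact sdiff_subset.trans (hF_sub i n)
  · exact (hF_closed i n).sdiff (isOpen_biUnion fun j _ => hU j)

theorem exists_measurable_discrete_edist_le {Y : Type u} [PseudoEMetricSpace Y] [MeasurableSpace Y]
    [OpensMeasurableSpace Y] {ε : ℝ≥0∞} (hε : ε ≠ 0) :
    ∃ (ι : Type u) (_ : MeasurableSpace ι) (_ : DiscreteMeasurableSpace ι) (f : Y → ι),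
      Measurable f ∧ ∀ x y, f x = f y → edist x y ≤ ε := by
  have cover : ⋃ y : Y, Metric.eball y (ε / 2) = univ :=
    eq_univ_of_forall fun y => mem_iUnion.2 ⟨y, Metric.mem_eball_self (ENNReal.half_pos hε)⟩
  obtain ⟨U, hU, hUcover, hUfin, hUball⟩ :=
    precise_refinement _ (fun _ => Metric.isOpen_eball) cover
  obtain ⟨f, hfU, hf⟩ := exists_forall_mem_measurableSet_preimage hU hUcover hUfin
  refine ⟨Y, ⊤, inferInstance, f, fun S _ => hf S, fun x y hxy => ?_⟩
  have hx : edist x (f x) < ε / 2 := hUball _ (hfU x)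
  have hy : edist y (f x) < ε / 2 := hxy ▸ hUball _ (hfU y)
  calc edist x y
      ≤ edist x (f x) + edist y (f x) := edist_triangle_right ..
    _ ≤ ε / 2 + ε / 2 := add_le_add hx.le hy.le
    _ = ε := ENNReal.add_halves ε

theorem exists_measurable_le_eLpNorm_eq {Ω : Type*} [MeasurableSpace Ω] (μ : Measure Ω)
    (f : Ω → ℝ≥0∞) {r : ℝ≥0∞} (hr : r ≠ ∞) :
    ∃ u, Measurable u ∧ u ≤ f ∧ eLpNorm u r μ = eLpNorm f r μ := by
  rcases eq_or_ne r 0 with rfl | hr₀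
  · exact ⟨0, measurable_zero, zero_le, by simp⟩
  have hr' : 0 < r.toReal := toReal_pos hr₀ hr
  obtain ⟨v, hv, hvf, hint⟩ := exists_measurable_le_lintegral_eq μ fun x => f x ^ r.toReal
  refine ⟨fun x => v x ^ r.toReal⁻¹, by fun_prop, fun x => ?_, ?_⟩
  · exact (rpow_inv_le_iff hr').2 (hvf x)
  · simp only [eLpNorm_eq_lintegral_rpow_enorm_toReal hr₀ hr, enorm_eq_self, hint,
      rpow_inv_rpow hr'.ne']

theorem eLpNorm_map_le {Ω Ω' : Type*} [MeasurableSpace Ω] [MeasurableSpace Ω'] {μ : Measure Ω}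
    {g : Ω → Ω'} (hg : Measurable g) (f : Ω' → ℝ≥0∞) {r : ℝ≥0∞} (hr : r ≠ ∞) :
    eLpNorm f r (μ.map g) ≤ eLpNorm (f ∘ g) r μ := by
  obtain ⟨u, hu, huf, hint⟩ := exists_measurable_le_eLpNorm_eq (μ.map g) f hr
  rw [← hint, eLpNorm_map_measure hu.aestronglyMeasurable hg.aemeasurable]
  exact eLpNorm_mono_enorm fun x => huf (g x)

theorem ae_forall_of_forall_ae_apply {ι α : Type*} [MeasurableSpace ι] {μ : Measure ι}
    {P : ι → α → Prop} (h : ∀ s : ι → α, ∀ᵐ i ∂μ, P i (s i)) : ∀ᵐ i ∂μ, ∀ x, P i x := by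
  classical
  rcases isEmpty_or_nonempty α with hα | ⟨⟨x₀⟩⟩
  · exact ae_of_all _ fun _ x => hα.elim x
  let s : ι → α := fun i => if hi : ∃ x, ¬ P i x then hi.choose else x₀
  filter_upwards [h s] with i hi
  by_contra! hbad
  rw [show s i = hbad.choose from dif_pos hbad] at hi
  exact hbad.choose_spec hi

theorem exists_measurable_le_forall_ae_le {Ω : Type*} [MeasurableSpace Ω] (μ : Measure Ω)
    [SigmaFinite μ] (f : Ω → ℝ≥0∞) :
    ∃ g, Measurable g ∧ g ≤ f ∧ ∀ g', Measurable g' → g' ≤ᵐ[μ] f → g' ≤ᵐ[μ] g := by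
  obtain ⟨g, hg, hgf, hint⟩ := exists_measurable_le_forall_setLIntegral_eq μ f
  refine ⟨g, hg, hgf, fun g' hg' hle => ?_⟩
  refine ae_le_of_forall_setLIntegral_le_of_sigmaFinite hg' fun A _ _ => ?_
  rw [← hint A]
  exact lintegral_mono_ae (ae_restrict_of_ae hle)

section Gluing

variable {ι α β : Type*}

/-- The embedding of `ι × β` into `(ι × α) × β` along the graph of a section `s : ι → α`. -/
def insertSection (s : ι → α) (p : ι × β) : (ι × α) × β := ((p.1, s p.1), p.2)

variable [MeasurableSpace ι] [MeasurableSpace α] [MeasurableSpace β]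

/-- `k (i, x)` is a version of the conditional probability, given `i`, that `π` assigns to the slice
`{z | ((i, x), z) ∈ E}`. Since `π` need not disintegrate, `k` is tested along every section
`s : ι → α`, so that exceptional null sets depend on `s` and not on the point `x`. -/
def IsSliceDensity (π : Measure (ι × β)) (E : Set ((ι × α) × β)) (k : ι × α → ℝ≥0∞) : Prop :=
  Measurable k ∧ ∀ (s : ι → α) (I : Set ι),
    ∫⁻ i in I, k (i, s i) ∂π.fst = π (Prod.fst ⁻¹' I ∩ insertSection s ⁻¹' E)

variable [DiscreteMeasurableSpace ι]

theorem measurable_insertSection (s : ι → α) :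
    Measurable (insertSection s : ι × β → (ι × α) × β) := by
  have hs : Measurable s := .of_discrete
  unfold insertSection
  fun_prop

theorem exists_setLIntegral_fst_eq_measure_inter (π : Measure (ι × β)) [IsFiniteMeasure π]
    (R : Set (ι × β)) :
    ∃ e : ι → ℝ≥0∞, ∀ I : Set ι, ∫⁻ i in I, e i ∂π.fst = π (Prod.fst ⁻¹' I ∩ R) := by
  have hac : (π.restrict R).fst ≪ π.fst :=
    Measure.AbsolutelyContinuous.map Measure.restrict_le_self.absolutelyContinuous measurable_fst
  refine ⟨(π.restrict R).fst.rnDeriv π.fst, fun I => ?_⟩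
  have hI : MeasurableSet I := .of_discrete
  rw [Measure.setLIntegral_rnDeriv hac, Measure.fst_apply hI,
    Measure.restrict_apply (measurable_fst hI)]

namespace IsSliceDensity

variable {π : Measure (ι × β)} {E E' : Set ((ι × α) × β)} {k k' : ι × α → ℝ≥0∞}

theorem ae_eq [IsFiniteMeasure π] (h : IsSliceDensity π E k) (h' : IsSliceDensity π E k') :
    ∀ᵐ i ∂π.fst, ∀ x, k (i, x) = k' (i, x) := by
  refine ae_forall_of_forall_ae_apply fun s => ?_
  refine ae_eq_of_forall_setLIntegral_eq_of_sigmaFinite .of_discrete .of_discrete fun I _ _ => ?_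
  rw [h.2, h'.2]

theorem ae_eq_zero (h : IsSliceDensity π E k) {S : Set (ι × α)}
    (hS : ∀ s : ι → α, ∀ᵐ p ∂π, (p.1, s p.1) ∈ S → insertSection s p ∉ E) :
    ∀ᵐ i ∂π.fst, ∀ x, (i, x) ∈ S → k (i, x) = 0 := by
  refine ae_forall_of_forall_ae_apply fun s => ?_
  refine (setLIntegral_eq_zero_iff (s := {i | (i, s i) ∈ S}) .of_discrete .of_discrete).1 ?_
  rw [h.2, measure_eq_zero_iff_ae_notMem]
  exact (hS s).mono fun p hp hpE => hp hpE.1 hpE.2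

theorem restrict (h : IsSliceDensity π E k) {S : Set (ι × α)} (hS : MeasurableSet S) :
    IsSliceDensity π (E ∩ Prod.fst ⁻¹' S) (S.indicator k) := by
  refine ⟨h.1.indicator hS, fun s I => ?_⟩
  have hJ : MeasurableSet {i | (i, s i) ∈ S} := .of_discrete
  calc ∫⁻ i in I, S.indicator k (i, s i) ∂π.fst
      = ∫⁻ i in I, {i | (i, s i) ∈ S}.indicator (fun i => k (i, s i)) i ∂π.fst := rfl
    _ = ∫⁻ i in {i | (i, s i) ∈ S} ∩ I, k (i, s i) ∂π.fst := setLIntegral_indicator hJ _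
    _ = π (Prod.fst ⁻¹' I ∩ insertSection s ⁻¹' (E ∩ Prod.fst ⁻¹' S)) := by
      rw [h.2]
      congr 1
      ext p
      simp only [insertSection, mem_inter_iff, mem_preimage, mem_ofPred_eq]
      tauto

theorem of_fiber {R : Set (ι × β)} {e : ι → ℝ≥0∞}
    (he : ∀ I : Set ι, ∫⁻ i in I, e i ∂π.fst = π (Prod.fst ⁻¹' I ∩ R)) :
    IsSliceDensity π ((fun q : (ι × α) × β => (q.1.1, q.2)) ⁻¹' R) (fun p : ι × α => e p.1) :=
  ⟨(Measurable.of_discrete (f := e)).comp measurable_fst, fun _ I => he I⟩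

theorem univ : IsSliceDensity π (univ : Set ((ι × α) × β)) 1 :=
  of_fiber (R := Set.univ) (e := 1) fun I => by
    simp [Measure.fst_apply (MeasurableSet.of_discrete (s := I))]

theorem compl [IsFiniteMeasure π] (hE : MeasurableSet E) (h : IsSliceDensity π E k) :
    IsSliceDensity π Eᶜ (1 - k) := by
  refine ⟨measurable_one.sub h.1, fun s I => ?_⟩
  have hle : (fun i => k (i, s i)) ≤ᵐ[π.fst] 1 :=
    ae_le_of_forall_setLIntegral_le_of_sigmaFinite .of_discrete fun J _ _ => by
      rw [h.2]
      exact (measure_mono (by simp)).trans_eq (univ.2 s J).symm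
  have hEs : MeasurableSet (Prod.fst ⁻¹' I ∩ insertSection s ⁻¹' E) :=
    (measurable_fst .of_discrete).inter (measurable_insertSection s hE)
  calc ∫⁻ i in I, (1 - k) (i, s i) ∂π.fst
      = ∫⁻ _ in I, 1 ∂π.fst - ∫⁻ i in I, k (i, s i) ∂π.fst :=
        lintegral_sub .of_discrete (by rw [h.2]; finiteness) (ae_restrict_of_ae hle)
    _ = π (Prod.fst ⁻¹' I) - π (Prod.fst ⁻¹' I ∩ insertSection s ⁻¹' E) := by
        rw [h.2, setLIntegral_one, Measure.fst_apply .of_discrete]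
    _ = π (Prod.fst ⁻¹' I ∩ insertSection s ⁻¹' Eᶜ) := by
        rw [← measure_sdiff inter_subset_left hEs.nullMeasurableSet (by finiteness),
          sdiff_self_inter, preimage_compl, sdiff_eq]

theorem iUnion {E : ℕ → Set ((ι × α) × β)} {k : ℕ → ι × α → ℝ≥0∞}
    (hd : Pairwise (Function.onFun Disjoint E)) (hE : ∀ n, MeasurableSet (E n))
    (h : ∀ n, IsSliceDensity π (E n) (k n)) :
    IsSliceDensity π (⋃ n, E n) (fun p => ∑' n, k n p) := by
  refine ⟨.tsum fun n => (h n).1, fun s I => ?_⟩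
  rw [lintegral_tsum fun _ => .of_discrete, preimage_iUnion, inter_iUnion, measure_iUnion]
  · simp only [(h _).2]
  · exact fun m n hmn => ((hd hmn).preimage _).mono inter_subset_right inter_subset_right
  · exact fun n => (measurable_fst .of_discrete).inter (measurable_insertSection s (hE n))

end IsSliceDensity

theorem exists_isSliceDensity (π : Measure (ι × β)) [IsFiniteMeasure π] {E : Set ((ι × α) × β)}
    (hE : MeasurableSet E) : ∃ k, IsSliceDensity π E k := by
  induction E, hE using
    MeasurableSpace.induction_on_inter generateFrom_prod.symm isPiSystem_prod with
  | empty => exact ⟨0, measurable_zero, by simp⟩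
  | basic _ hR =>
    obtain ⟨S, hS, B, -, rfl⟩ := hR
    obtain ⟨e, he⟩ := exists_setLIntegral_fst_eq_measure_inter π (Prod.snd ⁻¹' B)
    have hk := (IsSliceDensity.of_fiber he).restrict hS
    exact ⟨_, inter_comm _ _ ▸ hk⟩
  | compl _ hE ih =>
    obtain ⟨k, hk⟩ := ih
    exact ⟨_, hk.compl hE⟩
  | iUnion _ hd hE ih =>
    choose k hk using ih
    exact ⟨_, .iUnion hd hE hk⟩

/-- `Γ` is the conditionally independent gluing of `π₁` and `π₂` over their common factor `ι`: the
law of `((i, x), z)` when `(i, x)` has law `π₁` and `z` is drawn from the conditional law of `π₂`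
given `i`. -/
def IsGluing (π₁ : Measure (ι × α)) (π₂ : Measure (ι × β)) (Γ : Measure ((ι × α) × β)) : Prop :=
  ∀ E, MeasurableSet E → ∀ k, IsSliceDensity π₂ E k → Γ E = ∫⁻ p, k p ∂π₁

variable {π₁ : Measure (ι × α)} {π₂ : Measure (ι × β)} [IsFiniteMeasure π₂]

theorem exists_isGluing (h : π₁.fst ≪ π₂.fst) : ∃ Γ, IsGluing π₁ π₂ Γ := by
  choose k hk using fun (E : Set ((ι × α) × β)) (hE : MeasurableSet E) =>
    exists_isSliceDensity π₂ hE
  have lintegral_congr_slice {E k k'} (hk : IsSliceDensity π₂ E k) (hk' : IsSliceDensity π₂ E k') :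
      ∫⁻ p, k p ∂π₁ = ∫⁻ p, k' p ∂π₁ := by
    have hae := ae_of_ae_map measurable_fst.aemeasurable (h.ae_le (hk.ae_eq hk'))
    exact lintegral_congr_ae (hae.mono fun p hp => hp p.2)
  refine ⟨Measure.ofMeasurable (fun E hE => ∫⁻ p, k E hE p ∂π₁) ?_ fun E hE hd => ?_,
    fun E hE k' hk' => ?_⟩
  · rw [lintegral_congr_slice (hk ∅ .empty) (k' := 0) ⟨measurable_zero, by simp⟩]
    simp
  · rw [lintegral_congr_slice (hk _ _) (.iUnion hd hE fun n => hk _ (hE n)),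
      lintegral_tsum fun n => (hk _ (hE n)).1.aemeasurable]
  · rw [Measure.ofMeasurable_apply _ hE]
    exact lintegral_congr_slice (hk E hE) hk'

namespace IsGluing

variable {Γ : Measure ((ι × α) × β)}

omit [IsFiniteMeasure π₂] in
theorem measurePreserving_fst (hΓ : IsGluing π₁ π₂ Γ) : MeasurePreserving Prod.fst Γ π₁ := by
  refine ⟨measurable_fst, ?_⟩
  ext S hS
  have hk : IsSliceDensity π₂ (Prod.fst ⁻¹' S : Set ((ι × α) × β)) (S.indicator 1) := by
    simpa using IsSliceDensity.univ.restrict hS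
  rw [Measure.map_apply measurable_fst hS, hΓ _ (measurable_fst hS) _ hk,
    lintegral_indicator_one hS]

theorem measurePreserving_fst_snd (hΓ : IsGluing π₁ π₂ Γ) (h : π₁.fst = π₂.fst) :
    MeasurePreserving (fun q => (q.1.1, q.2)) Γ π₂ := by
  have hm : Measurable fun q : (ι × α) × β => (q.1.1, q.2) := by fun_prop
  refine ⟨hm, ?_⟩
  ext R hR
  obtain ⟨e, he⟩ := exists_setLIntegral_fst_eq_measure_inter π₂ R
  calc Γ.map (fun q => (q.1.1, q.2)) R
      = ∫⁻ p, e p.1 ∂π₁ := by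
        rw [Measure.map_apply hm hR, hΓ _ (hm hR) _ (.of_fiber he)]
    _ = ∫⁻ i, e i ∂π₂.fst := by
        rw [← h, Measure.fst, lintegral_map .of_discrete measurable_fst]
    _ = π₂ R := by simpa using he univ

theorem ae_le_comp_fst (hΓ : IsGluing π₁ π₂ Γ) (h : π₁.fst ≪ π₂.fst) {u : (ι × α) × β → ℝ≥0∞}
    (hu : Measurable u) {c g : ι × α → ℝ≥0∞} (hg : Measurable g)
    (hmax : ∀ g', Measurable g' → g' ≤ᵐ[π₁] c → g' ≤ᵐ[π₁] g)
    (huc : ∀ s : ι → α, ∀ᵐ p ∂π₂, u (insertSection s p) ≤ c (p.1, s p.1)) :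
    ∀ᵐ q ∂Γ, u q ≤ g q.1 := by
  have level_null (a : ℝ≥0∞) : Γ ({q | a < u q} ∩ Prod.fst ⁻¹' {p | g p < a}) = 0 := by
    have hE : MeasurableSet {q | a < u q} := measurableSet_lt measurable_const hu
    have hS : MeasurableSet {p | g p < a} := measurableSet_lt hg measurable_const
    obtain ⟨k, hk⟩ := exists_isSliceDensity π₂ hE
    have slice_null : ∀ᵐ i ∂π₂.fst, ∀ x, c (i, x) ≤ a → k (i, x) = 0 :=
      hk.ae_eq_zero (S := {p | c p ≤ a}) fun s => by
        filter_upwards [huc s] with p hp hpa hpE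
        exact (hpE.trans_le (hp.trans hpa)).false
    have le_c : (k ⁻¹' {0}ᶜ).indicator (fun _ => a) ≤ᵐ[π₁] c := by
      filter_upwards [ae_of_ae_map measurable_fst.aemeasurable (h.ae_le slice_null)] with p hp
      refine indicator_apply_le fun hkp => ?_
      exact le_of_not_ge fun hle => hkp (hp p.2 hle)
    have le_g := hmax _ (measurable_const.indicator (hk.1 (measurableSet_singleton 0).compl)) le_c
    rw [hΓ _ (hE.inter (measurable_fst hS)) _ (hk.restrict hS), lintegral_indicator hS,
      setLIntegral_eq_zero_iff hS hk.1]
    filter_upwards [le_g] with p hp hgp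
    by_contra hkp
    rw [indicator_of_mem (show p ∈ k ⁻¹' {0}ᶜ from hkp)] at hp
    exact hp.not_gt hgp
  have not_mem_level : ∀ᵐ q ∂Γ, ∀ a : ℚ,
      ¬ (((a : ℝ).toNNReal : ℝ≥0∞) < u q ∧ g q.1 < (a : ℝ).toNNReal) :=
    ae_all_iff.2 fun a => measure_eq_zero_iff_ae_notMem.1 (level_null (a : ℝ).toNNReal)
  filter_upwards [not_mem_level] with q hq
  by_contra! hlt
  obtain ⟨a, _, hga, hau⟩ := ENNReal.lt_iff_exists_rat_btwn.1 hlt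
  exact hq a ⟨hau, hga⟩

theorem exists_measurable_ae_le_add [SigmaFinite π₁] (hΓ : IsGluing π₁ π₂ Γ)
    (h : π₁.fst = π₂.fst) {u : (ι × α) × β → ℝ≥0∞} (hu : Measurable u)
    {c₁ : ι × α → ℝ≥0∞} {c₂ : ι × β → ℝ≥0∞} (huc : ∀ q, u q ≤ c₁ q.1 + c₂ (q.1.1, q.2)) :
    ∃ g₁ g₂, Measurable g₁ ∧ Measurable g₂ ∧ g₁ ≤ c₁ ∧ g₂ ≤ c₂ ∧
      ∀ᵐ q ∂Γ, u q ≤ g₁ q.1 + g₂ (q.1.1, q.2) := by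
  obtain ⟨g₁, hg₁, hgc₁, hmax₁⟩ := exists_measurable_le_forall_ae_le π₁ c₁
  obtain ⟨g₂, hg₂, hgc₂, hmax₂⟩ := exists_measurable_le_forall_ae_le π₂ c₂
  refine ⟨g₁, g₂, hg₁, hg₂, hgc₁, hgc₂, ?_⟩
  have sub_le_g₁ : ∀ᵐ q ∂Γ, u q - g₂ (q.1.1, q.2) ≤ g₁ q.1 := by
    refine hΓ.ae_le_comp_fst (h ▸ .rfl) (by fun_prop) hg₁ hmax₁ fun s => ?_
    have hc₁ : Measurable fun p : ι × β => c₁ (p.1, s p.1) :=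
      (Measurable.of_discrete (f := fun i => c₁ (i, s i))).comp measurable_fst
    have sub_le_g₂ := hmax₂ (fun p => u (insertSection s p) - c₁ (p.1, s p.1))
      ((hu.comp (measurable_insertSection s)).sub hc₁)
      (ae_of_all _ fun p => tsub_le_iff_left.2 (huc (insertSection s p)))
    filter_upwards [sub_le_g₂] with p hp
    exact tsub_le_iff_tsub_le.1 hp
  filter_upwards [sub_le_g₁] with q hq
  exact tsub_le_iff_right.1 hq

theorem eLpNorm_le_add [SigmaFinite π₁] (hΓ : IsGluing π₁ π₂ Γ) (h : π₁.fst = π₂.fst) {r : ℝ≥0∞}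
    (hr : 1 ≤ r) {u : (ι × α) × β → ℝ≥0∞} (hu : Measurable u)
    {c₁ : ι × α → ℝ≥0∞} {c₂ : ι × β → ℝ≥0∞} (huc : ∀ q, u q ≤ c₁ q.1 + c₂ (q.1.1, q.2)) :
    eLpNorm u r Γ ≤ eLpNorm c₁ r π₁ + eLpNorm c₂ r π₂ := by
  obtain ⟨g₁, g₂, hg₁, hg₂, hgc₁, hgc₂, hug⟩ := hΓ.exists_measurable_ae_le_add h hu huc
  have hΓ₁ := hΓ.measurePreserving_fst
  have hΓ₂ := hΓ.measurePreserving_fst_snd h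
  calc eLpNorm u r Γ
      ≤ eLpNorm (fun q => g₁ q.1 + g₂ (q.1.1, q.2)) r Γ := eLpNorm_mono_enorm_ae hug
    _ ≤ eLpNorm (fun q => g₁ q.1) r Γ + eLpNorm (fun q => g₂ (q.1.1, q.2)) r Γ :=
        eLpNorm_add_le (hg₁.comp hΓ₁.measurable).aestronglyMeasurable
          (hg₂.comp hΓ₂.measurable).aestronglyMeasurable hr
    _ = eLpNorm g₁ r π₁ + eLpNorm g₂ r π₂ :=
        congrArg₂ _ (eLpNorm_comp_measurePreserving (by fun_prop) hΓ₁)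
          (eLpNorm_comp_measurePreserving (by fun_prop) hΓ₂)
    _ ≤ eLpNorm c₁ r π₁ + eLpNorm c₂ r π₂ :=
        add_le_add (eLpNorm_mono_enorm hgc₁) (eLpNorm_mono_enorm hgc₂)

end IsGluing

end Gluing

namespace IsCoupling

variable {π π' : Measure (X × X)} {μ μ' ν ν' : Measure X}

omit [MetricSpace X] [BorelSpace X] in
theorem symm (h : IsCoupling π μ ν) : IsCoupling (π.map Prod.swap) ν μ := by
  constructor <;> rw [Measure.map_map (by fun_prop) measurable_swap]
  exacts [h.2, h.1]

omit [MetricSpace X] [BorelSpace X] in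
theorem measure_univ_left (h : IsCoupling π μ ν) : π univ = μ univ := by
  rw [← h.1, Measure.map_apply measurable_fst .univ, preimage_univ]

omit [MetricSpace X] [BorelSpace X] in
theorem measure_univ_right (h : IsCoupling π μ ν) : π univ = ν univ := by
  rw [← h.2, Measure.map_apply measurable_snd .univ, preimage_univ]

omit [MetricSpace X] [BorelSpace X] in
theorem add (h : IsCoupling π μ ν) (h' : IsCoupling π' μ' ν') :
    IsCoupling (π + π') (μ + μ') (ν + ν') := by
  constructor <;> rw [Measure.map_add _ _ (by fun_prop)]
  exacts [congrArg₂ _ h.1 h'.1, congrArg₂ _ h.2 h'.2]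

omit [MetricSpace X] [BorelSpace X] in
theorem smul (h : IsCoupling π μ ν) (a : ℝ≥0∞) : IsCoupling (a • π) (a • μ) (a • ν) := by
  constructor <;> rw [Measure.map_smul]
  exacts [congrArg _ h.1, congrArg _ h.2]

end IsCoupling

omit [BorelSpace X] in
theorem W2_eq_iInf_eLpNorm (μ ν : Measure X) :
    W2 μ ν = ⨅ (π) (_ : IsCoupling π μ ν), eLpNorm (fun p : X × X => edist p.1 p.2) 2 π := by
  have cost_eq (π : Measure (X × X)) : eLpNorm (fun p : X × X => edist p.1 p.2) 2 π =
      orderIsoRpow (1 / 2) one_half_pos (∫⁻ p, ENNReal.ofReal (dist p.1 p.2 ^ 2) ∂π) := by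
    simp [eLpNorm_eq_lintegral_rpow_enorm_toReal two_ne_zero ofNat_ne_top, edist_dist,
      ofReal_pow]
  simp only [cost_eq, ← OrderIso.map_iInf]
  rfl

omit [BorelSpace X] in
theorem W2_le_iff {μ ν : Measure X} {c : ℝ≥0∞} : W2 μ ν ≤ c ↔ W2sq μ ν ≤ c ^ 2 := by
  rw [W2, one_div, rpow_inv_le_iff two_pos, rpow_ofNat]

omit [BorelSpace X] in
theorem W2sq_le {π : Measure (X × X)} {μ ν : Measure X} (h : IsCoupling π μ ν) :
    W2sq μ ν ≤ ∫⁻ p, ENNReal.ofReal (dist p.1 p.2 ^ 2) ∂π :=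
  iInf₂_le π h

omit [BorelSpace X] in
theorem W2sq_comm (μ ν : Measure X) : W2sq μ ν = W2sq ν μ := by
  have W2sq_le_swap (μ ν : Measure X) : W2sq μ ν ≤ W2sq ν μ := le_iInf₂ fun π hπ => by
    refine (W2sq_le hπ.symm).trans ((lintegral_map_le _ _).trans_eq ?_)
    simp only [Prod.fst_swap, Prod.snd_swap, dist_comm]
  exact (W2sq_le_swap μ ν).antisymm (W2sq_le_swap ν μ)

omit [BorelSpace X] in
theorem W2_comm (μ ν : Measure X) : W2 μ ν = W2 ν μ := by
  rw [W2, W2, W2sq_comm]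

omit [BorelSpace X] in
theorem W2sq_dirac_le (μ : Measure X) [IsProbabilityMeasure μ] (x₀ : X) :
    W2sq (.dirac x₀) μ ≤ ∫⁻ x, ENNReal.ofReal (dist x₀ x ^ 2) ∂μ := by
  have hm : Measurable fun x : X => (x₀, x) := by fun_prop
  have hπ : IsCoupling (μ.map fun x => (x₀, x)) (.dirac x₀) μ := by
    constructor <;> simp [Measure.map_map, hm, measurable_fst, measurable_snd, Function.comp_def]
  exact (W2sq_le hπ).trans (lintegral_map_le _ _)

omit [BorelSpace X] in
theorem W2sq_add_le (μ₀ μ₁ ν₀ ν₁ : Measure X) :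
    W2sq (μ₀ + μ₁) (ν₀ + ν₁) ≤ W2sq μ₀ ν₀ + W2sq μ₁ ν₁ := by
  refine ENNReal.le_iInf₂_add_iInf₂ fun π₀ h₀ π₁ h₁ => ?_
  exact (W2sq_le (h₀.add h₁)).trans_eq (lintegral_add_measure ..)

omit [BorelSpace X] in
theorem W2sq_smul_le {a : ℝ≥0∞} (ha : a ≠ ∞) (μ ν : Measure X) :
    W2sq (a • μ) (a • ν) ≤ a * W2sq μ ν := by
  rcases eq_or_ne a 0 with rfl | ha₀
  · have zero_coupling : IsCoupling 0 (0 : Measure X) 0 := ⟨Measure.map_zero _, Measure.map_zero _⟩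
    simpa using W2sq_le zero_coupling
  refine (ENNReal.inv_mul_le_iff ha₀ ha).1 (le_iInf₂ fun π hπ => ?_)
  rw [ENNReal.inv_mul_le_iff ha₀ ha]
  exact (W2sq_le (hπ.smul a)).trans_eq (lintegral_smul_measure ..)

omit [BorelSpace X] in
theorem W2sq_smul_add_smul_le {a b : ℝ≥0∞} (ha : a ≠ ∞) (hb : b ≠ ∞) (μ₀ μ₁ ν₀ ν₁ : Measure X) :
    W2sq (a • μ₀ + b • μ₁) (a • ν₀ + b • ν₁) ≤ a * W2sq μ₀ ν₀ + b * W2sq μ₁ ν₁ :=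
  (W2sq_add_le ..).trans (add_le_add (W2sq_smul_le ha ..) (W2sq_smul_le hb ..))

omit [BorelSpace X] in
theorem W2_smul_add_smul_le {a b : ℝ≥0∞} (hab : a + b = 1) {μ ν₀ ν₁ : Measure X} {c : ℝ≥0∞}
    (h₀ : W2 μ ν₀ ≤ c) (h₁ : W2 μ ν₁ ≤ c) : W2 μ (a • ν₀ + b • ν₁) ≤ c := by
  obtain ⟨ha, hb⟩ : a ≠ ∞ ∧ b ≠ ∞ := by simp [← ENNReal.add_ne_top, hab]
  rw [W2_le_iff] at *
  calc W2sq μ (a • ν₀ + b • ν₁)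
      = W2sq (a • μ + b • μ) (a • ν₀ + b • ν₁) := by rw [← add_smul, hab, one_smul]
    _ ≤ a * W2sq μ ν₀ + b * W2sq μ ν₁ := W2sq_smul_add_smul_le ha hb ..
    _ ≤ a * c ^ 2 + b * c ^ 2 := by gcongr
    _ = c ^ 2 := by rw [← add_mul, hab, one_mul]

omit [BorelSpace X] in
theorem InP2.smul_add_smul {a b : ℝ≥0∞} (hab : a + b = 1) {ν₀ ν₁ : Measure X} {x₀ : X}
    (h₀ : InP2 ν₀ x₀) (h₁ : InP2 ν₁ x₀) : InP2 (a • ν₀ + b • ν₁) x₀ := by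
  obtain ⟨ha, hb⟩ : a < ∞ ∧ b < ∞ := by simp [← ENNReal.add_lt_top, hab]
  obtain ⟨_, h₀⟩ := h₀
  obtain ⟨_, h₁⟩ := h₁
  refine ⟨⟨by simp [hab]⟩, ?_⟩
  simpa only [FiniteSecondMoment, lintegral_add_measure, lintegral_smul_measure,
    smul_eq_mul] using
    ENNReal.add_lt_top.2 ⟨ENNReal.mul_lt_top ha h₀, ENNReal.mul_lt_top hb h₁⟩

theorem edist_sub_le_iInf_add_iInf {ι Y : Type*} [PseudoEMetricSpace Y] {f : Y → ι} {ε : ℝ≥0∞}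
    (hε : ∀ x y, f x = f y → edist x y ≤ ε) (i : ι) (x z : Y) :
    edist x z - ε ≤ (⨅ (y) (_ : f y = i), edist x y) + ⨅ (y) (_ : f y = i), edist y z := by
  refine ENNReal.le_iInf₂_add_iInf₂ fun y hy y' hy' => tsub_le_iff_right.2 ?_
  calc edist x z
      ≤ edist x y + edist y y' + edist y' z := edist_triangle4 ..
    _ ≤ edist x y + ε + edist y' z := by gcongr; exact hε _ _ (hy.trans hy'.symm)
    _ = edist x y + edist y' z + ε := add_right_comm ..

theorem IsGluing.isCoupling_map {ι α : Type*} [MeasurableSpace ι] [MeasurableSpace α]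
    [DiscreteMeasurableSpace ι] {π₁ π₂ : Measure (ι × α)} [IsFiniteMeasure π₂]
    {Γ : Measure ((ι × α) × α)} (hΓ : IsGluing π₁ π₂ Γ) (h : π₁.fst = π₂.fst) :
    IsCoupling (Γ.map fun q => (q.1.2, q.2)) π₁.snd π₂.snd := by
  have hm : Measurable fun q : (ι × α) × α => (q.1.2, q.2) := by fun_prop
  constructor
  · rw [Measure.snd, ← hΓ.measurePreserving_fst.map_eq, Measure.map_map measurable_fst hm,
      Measure.map_map measurable_snd measurable_fst]
    rfl
  · have hΓ₂ := hΓ.measurePreserving_fst_snd h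
    rw [Measure.snd, ← hΓ₂.map_eq, Measure.map_map measurable_snd hm,
      Measure.map_map measurable_snd hΓ₂.measurable]
    rfl

omit [BorelSpace X] in
theorem IsCoupling.exists_forall_eLpNorm_tsub_le {πa πb : Measure (X × X)} {μ ν ρ : Measure X}
    [IsFiniteMeasure ν] (ha : IsCoupling πa μ ν) (hb : IsCoupling πb ν ρ) {ι : Type*}
    [MeasurableSpace ι] [DiscreteMeasurableSpace ι] {f : X → ι} (hf : Measurable f) {ε r : ℝ≥0∞}
    (hε : ∀ x y, f x = f y → edist x y ≤ ε) (hr : 1 ≤ r) (hr' : r ≠ ∞) :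
    ∃ γ, IsCoupling γ μ ρ ∧ ∀ u : X × X → ℝ≥0∞, Measurable u → (∀ p, u p ≤ edist p.1 p.2) →
      eLpNorm (fun p => u p - ε) r γ ≤
        eLpNorm (fun p => edist p.1 p.2) r πa + eLpNorm (fun p => edist p.1 p.2) r πb := by
  have : IsFiniteMeasure πa := ⟨ha.measure_univ_right ▸ measure_lt_top ν univ⟩
  have : IsFiniteMeasure πb := ⟨hb.measure_univ_left ▸ measure_lt_top ν univ⟩
  have hga : Measurable fun p : X × X => (f p.2, p.1) := by fun_prop
  have hgb : Measurable fun p : X × X => (f p.1, p.2) := by fun_prop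
  have hfst : (πa.map fun p => (f p.2, p.1)).fst = (πb.map fun p => (f p.1, p.2)).fst := by
    calc (πa.map fun p => (f p.2, p.1)).fst
        = (πa.map Prod.snd).map f := by
          rw [Measure.fst_map_prodMk measurable_fst, Measure.map_map hf measurable_snd]; rfl
      _ = (πb.map Prod.fst).map f := by rw [ha.2, hb.1]
      _ = (πb.map fun p => (f p.1, p.2)).fst := by
          rw [Measure.fst_map_prodMk measurable_snd, Measure.map_map hf measurable_fst]; rfl
  obtain ⟨Γ, hΓ⟩ := exists_isGluing (Measure.absolutelyContinuous_of_eq hfst)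
  have hm : Measurable fun q : (ι × X) × X => (q.1.2, q.2) := by fun_prop
  have hγ : IsCoupling (Γ.map fun q => (q.1.2, q.2)) μ ρ := by
    convert hΓ.isCoupling_map hfst
    · rw [Measure.snd_map_prodMk hga.fst]; exact ha.1.symm
    · rw [Measure.snd_map_prodMk hgb.fst]; exact hb.2.symm
  refine ⟨_, hγ, fun u hu hud => ?_⟩
  let c₁ (p : ι × X) : ℝ≥0∞ := ⨅ (y) (_ : f y = p.1), edist p.2 y
  let c₂ (p : ι × X) : ℝ≥0∞ := ⨅ (y) (_ : f y = p.1), edist y p.2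
  have hc₁ (p : X × X) : c₁ (f p.2, p.1) ≤ edist p.1 p.2 := iInf₂_le_of_le p.2 rfl le_rfl
  have hc₂ (p : X × X) : c₂ (f p.1, p.2) ≤ edist p.1 p.2 := iInf₂_le_of_le p.1 rfl le_rfl
  calc eLpNorm (fun p => u p - ε) r (Γ.map fun q => (q.1.2, q.2))
      = eLpNorm (fun q => u (q.1.2, q.2) - ε) r Γ :=
        eLpNorm_map_measure (hu.sub_const ε).aestronglyMeasurable hm.aemeasurable
    _ ≤ eLpNorm c₁ r (πa.map fun p => (f p.2, p.1)) + eLpNorm c₂ r (πb.map fun p => (f p.1, p.2)) :=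
        hΓ.eLpNorm_le_add hfst hr ((hu.comp hm).sub_const ε) fun q =>
          (tsub_le_tsub_right (hud _) ε).trans (edist_sub_le_iInf_add_iInf hε ..)
    _ ≤ eLpNorm (fun p => edist p.1 p.2) r πa + eLpNorm (fun p => edist p.1 p.2) r πb :=
        add_le_add ((eLpNorm_map_le hga c₁ hr').trans (eLpNorm_mono_enorm hc₁))
          ((eLpNorm_map_le hgb c₂ hr').trans (eLpNorm_mono_enorm hc₂))

theorem IsCoupling.exists_eLpNorm_edist_le {πa πb : Measure (X × X)} {μ ν ρ : Measure X}
    [IsFiniteMeasure ν] (ha : IsCoupling πa μ ν) (hb : IsCoupling πb ν ρ) {r δ : ℝ≥0∞}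
    (hr : 1 ≤ r) (hr' : r ≠ ∞) (hδ : δ ≠ 0) :
    ∃ γ, IsCoupling γ μ ρ ∧ eLpNorm (fun p => edist p.1 p.2) r γ ≤
      eLpNorm (fun p => edist p.1 p.2) r πa + eLpNorm (fun p => edist p.1 p.2) r πb + δ := by
  obtain ⟨ε, hε, hεδ⟩ : ∃ ε : NNReal, 0 < ε ∧ ε * ν univ ^ (1 / r.toReal) < δ :=
    exists_nnreal_pos_mul_lt (rpow_ne_top_of_nonneg (by positivity) (by finiteness)) hδ
  obtain ⟨ι, _, _, f, hf, hfε⟩ :=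
    exists_measurable_discrete_edist_le (Y := X) (ENNReal.coe_pos.2 hε).ne'
  obtain ⟨γ, hγ, hγ_le⟩ := ha.exists_forall_eLpNorm_tsub_le hb hf hfε hr hr'
  obtain ⟨u, hu, hud, hu_norm⟩ :=
    exists_measurable_le_eLpNorm_eq γ (fun p : X × X => edist p.1 p.2) hr'
  have mass_eq : γ univ = ν univ := by
    rw [hγ.measure_univ_left, ← ha.measure_univ_left, ha.measure_univ_right]
  have norm_const_le : eLpNorm (fun _ => (ε : ℝ≥0∞)) r γ ≤ δ := by
    rw [eLpNorm_const' _ (one_pos.trans_le hr).ne' hr', mass_eq]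
    exact hεδ.le
  refine ⟨γ, hγ, ?_⟩
  calc eLpNorm (fun p => edist p.1 p.2) r γ
      = eLpNorm u r γ := hu_norm.symm
    _ ≤ eLpNorm (fun p => (u p - ε) + ε) r γ := eLpNorm_mono_enorm fun p => le_tsub_add
    _ ≤ eLpNorm (fun p => u p - ε) r γ + eLpNorm (fun _ => (ε : ℝ≥0∞)) r γ :=
        eLpNorm_add_le (hu.sub_const _).aestronglyMeasurable (by fun_prop) hr
    _ ≤ _ := add_le_add (hγ_le u hu hud) norm_const_le

theorem W2_triangle (μ ν ρ : Measure X) [IsFiniteMeasure ν] : W2 μ ρ ≤ W2 μ ν + W2 ν ρ := by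
  simp only [W2_eq_iInf_eLpNorm]
  refine ENNReal.le_iInf₂_add_iInf₂ fun πa ha πb hb =>
    ENNReal.le_of_forall_pos_le_add fun δ hδ _ => ?_
  obtain ⟨γ, hγ, hγ_le⟩ := ha.exists_eLpNorm_edist_le hb one_le_two ofNat_ne_top
    (ENNReal.coe_pos.2 hδ).ne'
  exact (iInf₂_le γ hγ).trans hγ_le

theorem InP2.W2_ne_top {μ ν : Measure X} {x₀ : X} (hμ : InP2 μ x₀) (hν : InP2 ν x₀) :
    W2 μ ν ≠ ∞ := by
  have W2_dirac_ne_top {ρ : Measure X} (hρ : InP2 ρ x₀) : W2 (.dirac x₀) ρ ≠ ∞ := by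
    obtain ⟨_, hρ⟩ := hρ
    exact rpow_ne_top_of_nonneg (by positivity) ((W2sq_dirac_le ρ x₀).trans_lt hρ).ne
  refine ((W2_triangle μ (.dirac x₀) ν).trans_lt ?_).ne
  rw [W2_comm μ]
  exact add_lt_top.2 ⟨(W2_dirac_ne_top hμ).lt_top, (W2_dirac_ne_top hν).lt_top⟩

theorem W2_le_of_tendsto {κ : Type*} {l : Filter κ} [l.NeBot] {μ ν : Measure X} {ρ : κ → Measure X}
    [∀ k, IsFiniteMeasure (ρ k)] {c : ℝ≥0∞} (hρ : ∀ k, W2 μ (ρ k) ≤ c)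
    (hlim : Tendsto (fun k => W2 (ρ k) ν) l (𝓝 0)) : W2 μ ν ≤ c := by
  refine ge_of_tendsto' (x := l) (by simpa using hlim.const_add c) fun k => ?_
  exact (W2_triangle μ (ρ k) ν).trans (add_le_add_left (hρ k) _)

theorem mem_interPoints_of_le {μ₀ μ₁ ν : Measure X} {x₀ : X} (hD : W2 μ₀ μ₁ ≠ ∞) {t : ℝ}
    (ht : t ∈ Icc (0 : ℝ) 1) (hν : InP2 ν x₀) (h₀ : W2 μ₀ ν ≤ ENNReal.ofReal t * W2 μ₀ μ₁)
    (h₁ : W2 μ₁ ν ≤ ENNReal.ofReal (1 - t) * W2 μ₀ μ₁) : ν ∈ InterPoints t μ₀ μ₁ x₀ := by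
  have := hν.1
  have le_sum : ENNReal.ofReal t * W2 μ₀ μ₁ + ENNReal.ofReal (1 - t) * W2 μ₀ μ₁ ≤
      W2 μ₀ ν + W2 μ₁ ν := by
    rw [← add_mul, ← ofReal_add ht.1 (sub_nonneg.2 ht.2), add_sub_cancel, ofReal_one, one_mul,
      W2_comm μ₁ ν]
    exact W2_triangle ..
  refine ⟨hν, h₀.antisymm ?_, h₁.antisymm ?_⟩
  · refine (ENNReal.add_le_add_iff_right (by finiteness)).1 (le_sum.trans ?_)
    gcongr
  · refine (ENNReal.add_le_add_iff_left (by finiteness)).1 (le_sum.trans ?_)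
    gcongr

theorem smul_add_smul_mem_interPoints {μ₀ μ₁ ν₀ ν₁ : Measure X} {x₀ : X} (hD : W2 μ₀ μ₁ ≠ ∞) {t : ℝ}
    (ht : t ∈ Icc (0 : ℝ) 1) (h₀ : ν₀ ∈ InterPoints t μ₀ μ₁ x₀) (h₁ : ν₁ ∈ InterPoints t μ₀ μ₁ x₀)
    {a b : ℝ≥0∞} (hab : a + b = 1) : a • ν₀ + b • ν₁ ∈ InterPoints t μ₀ μ₁ x₀ :=
  mem_interPoints_of_le hD ht (h₀.1.smul_add_smul hab h₁.1)
    (W2_smul_add_smul_le hab h₀.2.1.le h₁.2.1.le) (W2_smul_add_smul_le hab h₀.2.2.le h₁.2.2.le)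

theorem mem_interPoints_of_tendsto {κ : Type*} {l : Filter κ} [l.NeBot] {μ₀ μ₁ ν : Measure X}
    {ρ : κ → Measure X} {x₀ : X} (hD : W2 μ₀ μ₁ ≠ ∞) {t : ℝ} (ht : t ∈ Icc (0 : ℝ) 1)
    (hρ : ∀ k, ρ k ∈ InterPoints t μ₀ μ₁ x₀) (hν : InP2 ν x₀)
    (hlim : Tendsto (fun k => W2 (ρ k) ν) l (𝓝 0)) : ν ∈ InterPoints t μ₀ μ₁ x₀ := by
  have (k : κ) : IsProbabilityMeasure (ρ k) := (hρ k).1.1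
  exact mem_interPoints_of_le hD ht hν (W2_le_of_tendsto (fun k => (hρ k).2.1.le) hlim)
    (W2_le_of_tendsto (fun k => (hρ k).2.2.le) hlim)

/-- The set of `t`-intermediate points `ℐ_t(μ₀,μ₁)` is convex (for linear interpolation of
measures) and (sequentially) closed in `(𝒫₂(X), W₂)`. -/
theorem stmt8 {X : Type*} [MetricSpace X] [MeasurableSpace X] [BorelSpace X]
    (x₀ : X) (μ₀ μ₁ : Measure X) (h₀ : InP2 μ₀ x₀) (h₁ : InP2 μ₁ x₀)
    (t : ℝ) (ht : t ∈ Ioo (0:ℝ) 1) :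
    (∀ ν₀ ∈ InterPoints t μ₀ μ₁ x₀, ∀ ν₁ ∈ InterPoints t μ₀ μ₁ x₀, ∀ l ∈ Icc (0:ℝ) 1,
        (ENNReal.ofReal (1 - l) • ν₀ + ENNReal.ofReal l • ν₁) ∈ InterPoints t μ₀ μ₁ x₀) ∧
    (∀ ν : ℕ → Measure X, (∀ n, ν n ∈ InterPoints t μ₀ μ₁ x₀) →
      ∀ νlim : Measure X, InP2 νlim x₀ →
        Tendsto (fun n => W2 (ν n) νlim) atTop (𝓝 0) → νlim ∈ InterPoints t μ₀ μ₁ x₀) := by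
  have hD : W2 μ₀ μ₁ ≠ ∞ := h₀.W2_ne_top h₁
  have ht' : t ∈ Icc (0 : ℝ) 1 := Ioo_subset_Icc_self ht
  refine ⟨fun ν₀ hν₀ ν₁ hν₁ l hl => ?_, fun ν hν νlim hνlim hlim => ?_⟩
  · have weights : ENNReal.ofReal (1 - l) + ENNReal.ofReal l = 1 := by
      rw [← ofReal_add (sub_nonneg.2 hl.2) hl.1, sub_add_cancel, ofReal_one]
    exact smul_add_smul_mem_interPoints hD ht' hν₀ hν₁ weights
  · exact mem_interPoints_of_tendsto hD ht' hν hνlim hlim
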